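/- arXiv:2202.09024 — 4 statements merged into one kernel-verified Lean document; each statement's English description precedes it below -/
import Mathlib

section
/- Let n ≥ 1, let w_0 be an integer, let w_1 and w_2 be non-zero integers, and let T ⊆ {1,…,n} with |T| = t ≤ n/2. Define f : {-1,1}^n → {-1,1} by f(x) = sgn(w_0 + w_1·Σ_{u∈T} x_u + w_2·Σ_{v∉T} x_v). If w_0 ≥ 0, let S_0 = {(i,j) : 0 ≤ i ≤ t, 0 ≤ j ≤ n−t, and −w_0 ≤ w_1(2i−t) + w_2(2j−(n−t)) ≤ w_0}; if w_0 < 0, let S_0 = {(i,j) : 0 ≤ i ≤ t, 0 ≤ j ≤ n−t, and w_0 < w_1(2i−t) + w_2(2j−(n−t)) < −w_0}. Then W^(0)[f] = 2^{-2n} · [Σ_{(i,j)∈S_0} C(t,i)·C(n−t,j)]². -/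
open Finset

namespace BKS

/-- sign function: 1 if z ≥ 0, -1 otherwise. -/
noncomputable def sgn (z : ℝ) : ℝ := if 0 ≤ z then 1 else -1

/-- encode Bool as the ±1 value of a bit. -/
def chi (b : Bool) : ℝ := if b then 1 else -1

/-- Fourier coefficient of f at S. -/
noncomputable def fourierCoeff {n : ℕ} (f : (Fin n → Bool) → ℝ) (S : Finset (Fin n)) : ℝ :=
  (1 / 2 ^ n : ℝ) * ∑ x : Fin n → Bool, f x * ∏ i ∈ S, chi (x i)

/-- Fourier weight of f at level k: W^(k)[f]. -/
noncomputable def fourierWeight {n : ℕ} (k : ℕ) (f : (Fin n → Bool) → ℝ) : ℝ :=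
  ∑ S ∈ Finset.univ.filter (fun S : Finset (Fin n) => S.card = k), (fourierCoeff f S) ^ 2

/-- Noise stability of f at ρ. -/
noncomputable def noiseStab {n : ℕ} (ρ : ℝ) (f : (Fin n → Bool) → ℝ) : ℝ :=
  ∑ k ∈ Finset.range (n + 1), ρ ^ k * fourierWeight k f

/-- Majority function on n bits. -/
noncomputable def Maj (n : ℕ) : (Fin n → Bool) → ℝ := fun x => sgn (∑ i, chi (x i))

/-- The function g_n(x) = sgn(2(x_1 + ⋯ + x_{n-3}) + x_{n-2} + x_{n-1} + x_n). -/
noncomputable def gfun (n : ℕ) : (Fin n → Bool) → ℝ :=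
  fun x => sgn (∑ i : Fin n, (if (i : ℕ) < n - 3 then (2 : ℝ) else 1) * chi (x i))

/-- f is a linear threshold function. -/
def IsLTF {n : ℕ} (f : (Fin n → Bool) → ℝ) : Prop :=
  ∃ (w0 : ℝ) (w : Fin n → ℝ), ∀ x, f x = sgn (w0 + ∑ i, w i * chi (x i))


lemma card_fiber {n : ℕ} (T : Finset (Fin n)) (i j : ℕ) :
    (Finset.univ.filter (fun x : Fin n → Bool =>
      (T.filter (fun u => x u = true)).card = i ∧
      (Tᶜ.filter (fun u => x u = true)).card = j)).card
      = T.card.choose i * (n - T.card).choose j := by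
  have hc : n - T.card = (Tᶜ).card := by simp [Finset.card_compl]
  rw [hc, ← Finset.card_powersetCard, ← Finset.card_powersetCard, ← Finset.card_product]
  refine Finset.card_bij' (fun x _ => (T.filter (fun u => x u = true), Tᶜ.filter (fun u => x u = true)))
    (fun p _ => fun u => decide (u ∈ p.1 ∪ p.2)) ?_ ?_ ?_ ?_
  · intro x hx
    simp only [Finset.mem_filter, Finset.mem_univ, true_and] at hx
    simp only [Finset.mem_product, Finset.mem_powersetCard]
    exact ⟨⟨Finset.filter_subset _ _, hx.1⟩, ⟨Finset.filter_subset _ _, hx.2⟩⟩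
  · rintro ⟨A, B⟩ hp
    simp only [Finset.mem_product, Finset.mem_powersetCard] at hp
    obtain ⟨⟨hA, hA'⟩, hB, hB'⟩ := hp
    have h1 : T.filter (fun u => decide (u ∈ A ∪ B) = true) = A := by
      ext u
      have := @hA u
      have := @hB u
      simp only [Finset.mem_compl, Finset.mem_filter, Finset.mem_union, decide_eq_true_eq] at *
      tauto
    have h2 : Tᶜ.filter (fun u => decide (u ∈ A ∪ B) = true) = B := by
      ext u
      have := @hA u
      have := @hB u
      simp only [Finset.mem_compl, Finset.mem_filter, Finset.mem_union, decide_eq_true_eq] at *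
      tauto
    simp only [Finset.mem_filter, Finset.mem_univ, true_and]
    rw [h1, h2]
    exact ⟨hA', hB'⟩
  · intro x hx
    funext u
    by_cases hu : u ∈ T <;> simp [hu]
  · rintro ⟨A, B⟩ hp
    simp only [Finset.mem_product, Finset.mem_powersetCard] at hp
    obtain ⟨⟨hA, hA'⟩, hB, hB'⟩ := hp
    refine Prod.ext ?_ ?_
    all_goals
      ext u
      have := @hA u
      have := @hB u
      simp only [Finset.mem_compl, Finset.mem_filter, Finset.mem_union, decide_eq_true_eq] at *
      tauto

lemma sum_chi {n : ℕ} (T : Finset (Fin n)) (x : Fin n → Bool) :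
    ∑ u ∈ T, chi (x u) = 2 * ((T.filter (fun u => x u = true)).card : ℝ) - T.card := by
  have h : ∀ u ∈ T, chi (x u) = 2 * (if x u = true then (1 : ℝ) else 0) - 1 := by
    intro u _
    unfold chi
    split_ifs <;> norm_num
  rw [Finset.sum_congr rfl h, Finset.sum_sub_distrib, ← Finset.mul_sum]
  simp

lemma sum_chi_neg {n : ℕ} (T : Finset (Fin n)) (x : Fin n → Bool) :
    ∑ u ∈ T, chi (!(x u)) = - ∑ u ∈ T, chi (x u) := by
  rw [← Finset.sum_neg_distrib]
  refine Finset.sum_congr rfl fun u _ => ?_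
  cases x u <;> simp [chi]

lemma sgn_pair (w z : ℤ) : sgn ((w : ℝ) + z) + sgn ((w : ℝ) - z) =
    2 * ((if 0 ≤ w then 1 else -1) *
      (if (if 0 ≤ w then (-w ≤ z ∧ z ≤ w) else (w < z ∧ z < -w)) then (1 : ℝ) else 0)) := by
  have h1 : (0 : ℝ) ≤ (w : ℝ) + z ↔ 0 ≤ w + z := by exact_mod_cast Iff.rfl
  have h2 : (0 : ℝ) ≤ (w : ℝ) - z ↔ 0 ≤ w - z := by exact_mod_cast Iff.rfl
  unfold sgn
  simp only [h1, h2]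
  split_ifs <;> first | omega | norm_num

open Classical in
theorem stmt1 (n : ℕ) (hn : 1 ≤ n) (w0 w1 w2 : ℤ) (hw1 : w1 ≠ 0) (hw2 : w2 ≠ 0)
    (T : Finset (Fin n)) (t : ℕ) (ht : T.card = t) (htn : 2 * t ≤ n)
    (f : (Fin n → Bool) → ℝ)
    (hf : ∀ x, f x = sgn ((w0 : ℝ) + (w1 : ℝ) * ∑ u ∈ T, chi (x u)
      + (w2 : ℝ) * ∑ v ∈ Tᶜ, chi (x v)))
    (S0 : Finset (ℕ × ℕ))
    (hS0 : S0 = (Finset.range (t + 1) ×ˢ Finset.range (n - t + 1)).filter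
      (fun p => if 0 ≤ w0 then
          (-w0 ≤ w1 * (2 * (p.1 : ℤ) - t) + w2 * (2 * (p.2 : ℤ) - ((n : ℤ) - t)) ∧
           w1 * (2 * (p.1 : ℤ) - t) + w2 * (2 * (p.2 : ℤ) - ((n : ℤ) - t)) ≤ w0)
        else
          (w0 < w1 * (2 * (p.1 : ℤ) - t) + w2 * (2 * (p.2 : ℤ) - ((n : ℤ) - t)) ∧
           w1 * (2 * (p.1 : ℤ) - t) + w2 * (2 * (p.2 : ℤ) - ((n : ℤ) - t)) < -w0))) :
    fourierWeight 0 f =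
      (1 / 2 ^ (2 * n) : ℝ) *
        (∑ p ∈ S0, ((t.choose p.1 : ℝ) * ((n - t).choose p.2 : ℝ))) ^ 2 := by
  have htn' : t ≤ n := by omega
  set Z : (Fin n → Bool) → ℤ := fun x =>
    w1 * (2 * ((T.filter (fun u => x u = true)).card : ℤ) - t)
      + w2 * (2 * ((Tᶜ.filter (fun u => x u = true)).card : ℤ) - ((n : ℤ) - t)) with hZ
  have hcc : ((Tᶜ.card : ℕ) : ℝ) = (n : ℝ) - t := by
    rw [Finset.card_compl, Fintype.card_fin, ht, Nat.cast_sub htn']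
  have hZx : ∀ x, (Z x : ℝ) = w1 * ∑ u ∈ T, chi (x u) + w2 * ∑ v ∈ Tᶜ, chi (x v) := by
    intro x
    rw [sum_chi, sum_chi, hcc, ht, hZ]
    push_cast
    ring
  have hfx : ∀ x, f x = sgn ((w0 : ℝ) + Z x) := by
    intro x
    rw [hf, hZx, add_assoc]
  have hfn : ∀ x : Fin n → Bool, f (fun u => !(x u)) = sgn ((w0 : ℝ) - Z x) := by
    intro x
    rw [hf, hZx, sum_chi_neg, sum_chi_neg]
    congr 1
    ring
  have hsymm : ∑ x : Fin n → Bool, f (fun u => !(x u)) = ∑ x, f x := by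
    refine Function.Bijective.sum_comp (e := fun (x : Fin n → Bool) u => !(x u)) ?_ f
    exact Function.Involutive.bijective (fun x => by simp)
  have hsum : ∑ x, f x = (if 0 ≤ w0 then (1 : ℝ) else -1) *
      ∑ x, (if (if 0 ≤ w0 then (-w0 ≤ Z x ∧ Z x ≤ w0) else (w0 < Z x ∧ Z x < -w0))
        then (1 : ℝ) else 0) := by
    have h2 : ∑ x, f x + ∑ x : Fin n → Bool, f (fun u => !(x u)) = 2 * ((if 0 ≤ w0 then (1 : ℝ) else -1) *
      ∑ x, (if (if 0 ≤ w0 then (-w0 ≤ Z x ∧ Z x ≤ w0) else (w0 < Z x ∧ Z x < -w0))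
        then (1 : ℝ) else 0)) := by
      rw [← Finset.sum_add_distrib, Finset.mul_sum, Finset.mul_sum]
      refine Finset.sum_congr rfl fun x _ => ?_
      rw [hfx, hfn, sgn_pair]
    rw [hsymm] at h2
    linarith
  have hcount : ∑ x, (if (if 0 ≤ w0 then (-w0 ≤ Z x ∧ Z x ≤ w0) else (w0 < Z x ∧ Z x < -w0))
        then (1 : ℝ) else 0) = ∑ p ∈ S0, ((t.choose p.1 : ℝ) * ((n - t).choose p.2 : ℝ)) := by
    rw [← Finset.sum_filter, Finset.sum_const, nsmul_eq_mul, mul_one]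
    rw [Finset.card_eq_sum_card_fiberwise (t := S0)
      (f := fun x : Fin n → Bool => ((T.filter (fun u => x u = true)).card,
        (Tᶜ.filter (fun u => x u = true)).card))]
    · push_cast
      refine Finset.sum_congr rfl fun p hp => ?_
      have key := card_fiber T p.1 p.2
      rw [ht] at key
      rw [← Nat.cast_mul, ← key]
      congr 2
      ext x
      rw [hS0, Finset.mem_filter] at hp
      simp only [Finset.mem_filter, Finset.mem_univ, true_and, Prod.ext_iff]
      constructor
      · exact fun h => h.2
      · rintro ⟨ha, hb⟩
        refine ⟨?_, ha, hb⟩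
        simp only [hZ, ha, hb]
        exact hp.2
    · intro x hx
      simp only [Finset.coe_filter, Finset.mem_univ, true_and, Set.mem_setOf_eq] at hx
      rw [hS0, Finset.mem_coe, Finset.mem_filter]
      refine ⟨?_, hx⟩
      have c1 := Finset.card_filter_le T (fun u => x u = true)
      have c2 := Finset.card_filter_le Tᶜ (fun u => x u = true)
      rw [Finset.card_compl, Fintype.card_fin] at c2
      simp only [Finset.mem_product, Finset.mem_range]
      omega
  have hw : fourierWeight 0 f = (fourierCoeff f ∅) ^ 2 := by
    unfold fourierWeight
    have : Finset.univ.filter (fun S : Finset (Fin n) => S.card = 0) = {∅} := by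
      ext S
      simp
    rw [this, Finset.sum_singleton]
  rw [hw, fourierCoeff]
  simp only [Finset.prod_empty, mul_one]
  rw [hsum, hcount, mul_pow, mul_pow]
  have e1 : (if 0 ≤ w0 then (1 : ℝ) else -1) ^ 2 = 1 := by split_ifs <;> norm_num
  rw [e1, one_mul, div_pow, one_pow, ← pow_mul, mul_comm n 2]

end BKS
end

section
/- Let n ≥ 1, let w_0 be an integer, let w_1 and w_2 be non-zero integers, and let T ⊆ {1,…,n} with |T| = t ≤ n/2. Define f : {-1,1}^n → {-1,1} by f(x) = sgn(w_0 + w_1·Σ_{u∈T} x_u + w_2·Σ_{v∉T} x_v). Let S_1 = {(i,j) : 0 ≤ i ≤ t−1, 0 ≤ j ≤ n−t, and −|w_1| ≤ w_0 + w_1(2i−(t−1)) + w_2(2j−(n−t)) < |w_1|} and S_2 = {(i,j) : 0 ≤ i ≤ t, 0 ≤ j ≤ n−t−1, and −|w_2| ≤ w_0 + w_1(2i−t) + w_2(2j−(n−t−1)) < |w_2|}. Then W^(1)[f] = (t/2^{2n−2}) · [Σ_{(i,j)∈S_1} C(t−1,i)·C(n−t,j)]² + ((n−t)/2^{2n−2})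 · [Σ_{(i,j)∈S_2} C(t,i)·C(n−t−1,j)]². -/
open Finset

namespace BKS

theorem chi_sum {n : ℕ} (U A : Finset (Fin n)) :
    ∑ u ∈ A, chi (decide (u ∈ U)) = 2 * ((U ∩ A).card : ℝ) - A.card := by
  have h : ∀ u, chi (decide (u ∈ U)) = 2 * (if u ∈ U then (1 : ℝ) else 0) - 1 := by
    intro u
    by_cases hu : u ∈ U <;> simp [chi, hu]
    norm_num
  simp only [h, Finset.sum_sub_distrib, ← Finset.mul_sum]
  rw [Finset.sum_ite_mem, Finset.inter_comm]
  simp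

theorem sum_split {n : ℕ} (A B : Finset (Fin n)) (hAB : Disjoint A B) (g : ℕ → ℕ → ℝ) :
    ∑ U ∈ (A ∪ B).powerset, g (U ∩ A).card (U ∩ B).card =
      ∑ i ∈ range (A.card + 1), ∑ j ∈ range (B.card + 1),
        ((A.card.choose i : ℝ) * (B.card.choose j : ℝ)) * g i j := by
  have h1 : ∑ U ∈ (A ∪ B).powerset, g (U ∩ A).card (U ∩ B).card =
      ∑ p ∈ A.powerset ×ˢ B.powerset, g p.1.card p.2.card := by
    refine Finset.sum_bij' (fun U _ => (U ∩ A, U ∩ B)) (fun p _ => p.1 ∪ p.2) ?_ ?_ ?_ ?_ ?_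
    · intro U _
      simp
    · intro p hp
      simp only [mem_product, mem_powerset] at hp ⊢
      exact Finset.union_subset_union hp.1 hp.2
    · intro U hU
      simp only [mem_powerset] at hU
      rw [← Finset.inter_union_distrib_left]
      exact Finset.inter_eq_left.2 hU
    · rintro ⟨P, Q⟩ hp
      simp only [mem_product, mem_powerset] at hp
      rw [Finset.disjoint_left] at hAB
      ext x
      · have := @hp.1 x
        have := @hp.2 x
        have := @hAB x
        simp only [mem_inter, mem_union]
        tauto
      · have := @hp.1 x
        have := @hp.2 x
        have := @hAB x
        simp only [mem_inter, mem_union]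
        tauto
    · intro U _
      rfl
  rw [h1, Finset.sum_product]
  have h2 : ∀ P : Finset (Fin n), ∑ Q ∈ B.powerset, g P.card Q.card =
      ∑ j ∈ range (B.card + 1), (B.card.choose j) • g P.card j :=
    fun P => Finset.sum_powerset_apply_card (fun j => g P.card j)
  simp only [h2]
  rw [Finset.sum_powerset_apply_card
    (fun i => ∑ j ∈ range (B.card + 1), (B.card.choose j) • g i j)]
  refine Finset.sum_congr rfl fun i _ => ?_
  rw [Finset.smul_sum]
  refine Finset.sum_congr rfl fun j _ => ?_
  simp only [nsmul_eq_mul]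
  ring

theorem sum_bool {n : ℕ} (h : (Fin n → Bool) → ℝ) :
    ∑ x, h x = ∑ U : Finset (Fin n), h (fun j => decide (j ∈ U)) := by
  symm
  refine Finset.sum_bij' (fun U _ => fun j => decide (j ∈ U))
    (fun x _ => Finset.univ.filter (fun j => x j = true)) ?_ ?_ ?_ ?_ ?_
  · simp
  · simp
  · intro U _
    ext j
    simp
  · intro x _
    ext j
    simp
  · simp

theorem sgn_diff (a z : ℤ) (ha : a ≠ 0) :
    sgn ((z + a : ℤ) : ℝ) - sgn ((z - a : ℤ) : ℝ) =
      (2 * (if 0 < a then (1 : ℝ) else -1)) * (if -|a| ≤ z ∧ z < |a| then 1 else 0) := by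
  unfold sgn
  simp only [Int.cast_nonneg_iff]
  rcases lt_or_gt_of_ne ha with h | h
  · rw [abs_of_neg h]
    split_ifs <;> first | omega | norm_num
  · rw [abs_of_pos h]
    split_ifs <;> first | omega | norm_num

theorem coeff_core {n : ℕ} (w0 a b : ℤ) (ha : a ≠ 0) (i : Fin n) (A B : Finset (Fin n))
    (hAB : Disjoint A B) (hiA : i ∉ A) (hiB : i ∉ B) (hu : insert i (A ∪ B) = Finset.univ)
    (hn : 1 ≤ n) (f : (Fin n → Bool) → ℝ)
    (hf : ∀ x, f x = sgn ((w0 : ℝ) + (a : ℝ) * ∑ u ∈ insert i A, chi (x u)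
      + (b : ℝ) * ∑ v ∈ B, chi (x v))) :
    (fourierCoeff f {i}) ^ 2 = (1 / 2 ^ (2 * n - 2) : ℝ) *
      (∑ p ∈ range (A.card + 1), ∑ q ∈ range (B.card + 1),
        ((A.card.choose p : ℝ) * (B.card.choose q : ℝ)) *
        (if -|a| ≤ w0 + a * (2 * (p : ℤ) - A.card) + b * (2 * (q : ℤ) - B.card) ∧
          w0 + a * (2 * (p : ℤ) - A.card) + b * (2 * (q : ℤ) - B.card) < |a|
          then (1 : ℝ) else 0)) ^ 2 := by
  have hi : i ∉ A ∪ B := by simp [hiA, hiB]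
  have key : ∑ x : Fin n → Bool, f x * chi (x i) = (2 * (if 0 < a then (1 : ℝ) else -1)) *
      ∑ p ∈ range (A.card + 1), ∑ q ∈ range (B.card + 1),
        ((A.card.choose p : ℝ) * (B.card.choose q : ℝ)) *
        (if -|a| ≤ w0 + a * (2 * (p : ℤ) - A.card) + b * (2 * (q : ℤ) - B.card) ∧
          w0 + a * (2 * (p : ℤ) - A.card) + b * (2 * (q : ℤ) - B.card) < |a|
          then (1 : ℝ) else 0) := by
    rw [← sum_split A B hAB (fun p q =>
        (if -|a| ≤ w0 + a * (2 * (p : ℤ) - A.card) + b * (2 * (q : ℤ) - B.card) ∧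
          w0 + a * (2 * (p : ℤ) - A.card) + b * (2 * (q : ℤ) - B.card) < |a|
          then (1 : ℝ) else 0))]
    rw [sum_bool, ← Finset.powerset_univ, ← hu, Finset.sum_powerset_insert hi,
      ← Finset.sum_add_distrib, Finset.mul_sum]
    refine Finset.sum_congr rfl fun U hU => ?_
    have hiU : i ∉ U := fun h => hi (mem_powerset.1 hU h)
    rw [← sgn_diff a _ ha, hf, hf]
    simp only [chi_sum, Finset.card_insert_of_notMem hiA]
    have e1 : U ∩ insert i A = U ∩ A := Finset.inter_insert_of_notMem hiU
    have e2 : insert i U ∩ insert i A = insert i (U ∩ A) := (Finset.insert_inter_distrib _ _ _).symm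
    have e3 : insert i U ∩ B = U ∩ B := Finset.insert_inter_of_notMem hiB
    have e4 : (insert i (U ∩ A)).card = (U ∩ A).card + 1 :=
      Finset.card_insert_of_notMem (by simp [hiU])
    rw [e1, e2, e3, e4]
    have c1 : chi (decide (i ∈ U)) = -1 := by simp [chi, hiU]
    have c2 : chi (decide (i ∈ insert i U)) = 1 := by simp [chi]
    rw [c1, c2, mul_one, mul_neg_one, neg_add_eq_sub]
    congr 2
    · push_cast
      ring
    · push_cast
      ring
  unfold fourierCoeff
  simp only [Finset.prod_singleton]
  rw [key]
  have hs : (if 0 < a then (1 : ℝ) else -1) ^ 2 = 1 := by split_ifs <;> norm_num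
  obtain ⟨m, rfl⟩ : ∃ m, n = m + 1 := ⟨n - 1, by omega⟩
  have e : 2 * (m + 1) - 2 = m * 2 := by omega
  rw [e, mul_pow, mul_pow, mul_pow, hs, pow_mul, pow_succ]
  have : (2 : ℝ) ^ m ≠ 0 := by positivity
  generalize (∑ p ∈ range (A.card + 1), ∑ q ∈ range (B.card + 1), _ : ℝ) = X
  field_simp
  ring

theorem weight_one {n : ℕ} (f : (Fin n → Bool) → ℝ) :
    fourierWeight 1 f = ∑ i, (fourierCoeff f {i}) ^ 2 := by
  unfold fourierWeight
  have : (Finset.univ.filter (fun S : Finset (Fin n) => S.card = 1)) =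
      Finset.univ.map ⟨fun i => {i}, Finset.singleton_injective⟩ := by
    ext S
    simp [Finset.card_eq_one, eq_comm]
  rw [this, Finset.sum_map]
  rfl

open Classical in
theorem stmt2 (n : ℕ) (hn : 1 ≤ n) (w0 w1 w2 : ℤ) (hw1 : w1 ≠ 0) (hw2 : w2 ≠ 0)
    (T : Finset (Fin n)) (t : ℕ) (ht : T.card = t) (htn : 2 * t ≤ n)
    (f : (Fin n → Bool) → ℝ)
    (hf : ∀ x, f x = sgn ((w0 : ℝ) + (w1 : ℝ) * ∑ u ∈ T, chi (x u)
      + (w2 : ℝ) * ∑ v ∈ Tᶜ, chi (x v)))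
    (S1 S2 : Finset (ℕ × ℕ))
    (hS1 : S1 = (Finset.range t ×ˢ Finset.range (n - t + 1)).filter
      (fun p =>
        -|w1| ≤ w0 + w1 * (2 * (p.1 : ℤ) - ((t : ℤ) - 1)) + w2 * (2 * (p.2 : ℤ) - ((n : ℤ) - t)) ∧
        w0 + w1 * (2 * (p.1 : ℤ) - ((t : ℤ) - 1)) + w2 * (2 * (p.2 : ℤ) - ((n : ℤ) - t)) < |w1|))
    (hS2 : S2 = (Finset.range (t + 1) ×ˢ Finset.range (n - t)).filter
      (fun p =>
        -|w2| ≤ w0 + w1 * (2 * (p.1 : ℤ) - t) + w2 * (2 * (p.2 : ℤ) - ((n : ℤ) - t - 1)) ∧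
        w0 + w1 * (2 * (p.1 : ℤ) - t) + w2 * (2 * (p.2 : ℤ) - ((n : ℤ) - t - 1)) < |w2|)) :
    fourierWeight 1 f =
      ((t : ℝ) / 2 ^ (2 * n - 2)) *
        (∑ p ∈ S1, (((t - 1).choose p.1 : ℝ) * ((n - t).choose p.2 : ℝ))) ^ 2 +
      (((n : ℝ) - t) / 2 ^ (2 * n - 2)) *
        (∑ p ∈ S2, ((t.choose p.1 : ℝ) * ((n - t - 1).choose p.2 : ℝ))) ^ 2 := by
  subst hS1 hS2
  have htn' : t ≤ n := by omega
  have hc : Tᶜ.card = n - t := by rw [Finset.card_compl, Fintype.card_fin, ht]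
  rw [weight_one, ← Finset.sum_add_sum_compl T]
  congr 1
  · have : ∀ i ∈ T, (fourierCoeff f {i}) ^ 2 = _ := fun i hi =>
      coeff_core w0 w1 w2 hw1 i (T.erase i) Tᶜ
        (Finset.disjoint_left.2 fun x hx => by simp [Finset.mem_of_mem_erase hx])
        (by simp) (by simp [hi])
        (by rw [← Finset.insert_union, Finset.insert_erase hi, Finset.union_compl]) hn f
        (by rw [Finset.insert_erase hi]; exact hf)
    have h2 : ∀ i ∈ T, (fourierCoeff f {i}) ^ 2 = (1 / 2 ^ (2 * n - 2) : ℝ) *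
      (∑ p ∈ (Finset.range t ×ˢ Finset.range (n - t + 1)).filter
      (fun p =>
        -|w1| ≤ w0 + w1 * (2 * (p.1 : ℤ) - ((t : ℤ) - 1)) + w2 * (2 * (p.2 : ℤ) - ((n : ℤ) - t)) ∧
        w0 + w1 * (2 * (p.1 : ℤ) - ((t : ℤ) - 1)) + w2 * (2 * (p.2 : ℤ) - ((n : ℤ) - t)) < |w1|),
        (((t - 1).choose p.1 : ℝ) * ((n - t).choose p.2 : ℝ))) ^ 2 := by
      intro i hi
      have ht1 : 1 ≤ t := by rw [← ht]; exact Finset.card_pos.2 ⟨i, hi⟩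
      rw [this i hi, Finset.card_erase_of_mem hi, ht, hc, Finset.sum_filter, Finset.sum_product,
        Nat.sub_add_cancel ht1]
      simp only [mul_ite, mul_one, mul_zero, Nat.cast_sub ht1, Nat.cast_sub htn', Nat.cast_one]
    rw [Finset.sum_congr rfl h2, Finset.sum_const, ht, nsmul_eq_mul]
    ring
  · have : ∀ i ∈ Tᶜ, (fourierCoeff f {i}) ^ 2 = _ := fun i hi =>
      coeff_core w0 w2 w1 hw2 i (Tᶜ.erase i) T
        (Finset.disjoint_left.2 fun x hx => by simpa using Finset.mem_of_mem_erase hx)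
        (by simp) (by simpa using hi)
        (by rw [← Finset.insert_union, Finset.insert_erase hi, Finset.union_comm,
              Finset.union_compl]) hn f
        (by rw [Finset.insert_erase hi]; intro x; rw [hf x, add_right_comm])
    have h2 : ∀ i ∈ Tᶜ, (fourierCoeff f {i}) ^ 2 = (1 / 2 ^ (2 * n - 2) : ℝ) *
      (∑ p ∈ (Finset.range (t + 1) ×ˢ Finset.range (n - t)).filter
      (fun p =>
        -|w2| ≤ w0 + w1 * (2 * (p.1 : ℤ) - t) + w2 * (2 * (p.2 : ℤ) - ((n : ℤ) - t - 1)) ∧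
        w0 + w1 * (2 * (p.1 : ℤ) - t) + w2 * (2 * (p.2 : ℤ) - ((n : ℤ) - t - 1)) < |w2|),
        ((t.choose p.1 : ℝ) * ((n - t - 1).choose p.2 : ℝ))) ^ 2 := by
      intro i hi
      have ht1 : 1 ≤ n - t := by rw [← hc]; exact Finset.card_pos.2 ⟨i, hi⟩
      rw [this i hi, Finset.card_erase_of_mem hi, ht, hc, Finset.sum_filter, Finset.sum_product,
        Nat.sub_add_cancel ht1, Finset.sum_comm]
      simp only [mul_ite, mul_one, mul_zero, Nat.cast_sub ht1, Nat.cast_sub htn', Nat.cast_one]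
      congr 2
      refine Finset.sum_congr rfl fun p _ => Finset.sum_congr rfl fun q _ => ?_
      rw [add_right_comm w0, mul_comm ((t.choose p : ℝ))]
    rw [Finset.sum_congr rfl h2, Finset.sum_const, hc, nsmul_eq_mul, Nat.cast_sub htn']
    ring

end BKS
end

section
/- For every odd n ≥ 3, W^(1)[g_n] = (n−3) · [8·C(n−4,(n−5)/2) / 2^{n−1}]² + 3 · [2·C(n−3,(n−3)/2) / 2^{n−1}]². -/
open Finset

namespace BKS

/-- number of true bits -/
def cnt {p : ℕ} (y : Fin p → Bool) : ℕ := ∑ i, if y i then 1 else 0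

theorem sum_cons {p : ℕ} (F : (Fin (p + 1) → Bool) → ℝ) :
    ∑ y, F y = ∑ y : Fin p → Bool, F (Fin.cons true y) + ∑ y : Fin p → Bool, F (Fin.cons false y) := by
  rw [← (Fin.consEquiv (fun _ : Fin (p + 1) => Bool)).sum_comp, Fintype.sum_prod_type]
  simp [Fin.consEquiv]

theorem sum_insertNth {p : ℕ} (i : Fin (p + 1)) (F : (Fin (p + 1) → Bool) → ℝ) :
    ∑ y, F y = ∑ y : Fin p → Bool, (F (i.insertNth true y) + F (i.insertNth false y)) := by
  rw [← (Fin.insertNthEquiv (fun _ : Fin (p + 1) => Bool) i).sum_comp, Fintype.sum_prod_type]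
  simp [Fin.insertNthEquiv, Finset.sum_add_distrib]

theorem sum_three (F : (Fin 3 → Bool) → ℝ) :
    ∑ z, F z = F ![true, true, true] + F ![true, true, false] + F ![true, false, true]
      + F ![true, false, false] + F ![false, true, true] + F ![false, true, false]
      + F ![false, false, true] + F ![false, false, false] := by
  rw [sum_cons]
  simp only [sum_cons, Fintype.sum_unique]
  have h : ∀ (a b c : Bool) (d : Fin 0 → Bool),
      (Fin.cons a (Fin.cons b (Fin.cons c d : Fin 1 → Bool) : Fin 2 → Bool) : Fin 3 → Bool)
        = ![a, b, c] := by
    intro a b c d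
    rw [Subsingleton.elim d ![]]
    rfl
  simp only [h]
  ring

theorem vec_two (a b c : Bool) : (![a, b, c] : Fin 3 → Bool) 2 = c := rfl

theorem count (p : ℕ) : ∀ j : ℕ,
    ∑ y : Fin p → Bool, (if cnt y = j then (1 : ℝ) else 0) = (p.choose j : ℝ) := by
  induction p with
  | zero => intro j; cases j <;> simp [cnt]
  | succ p ih =>
    intro j
    rw [sum_cons]
    have h1 : ∀ y : Fin p → Bool, cnt (Fin.cons true y : Fin (p + 1) → Bool) = cnt y + 1 := by
      intro y; unfold cnt; rw [Fin.sum_univ_succ]; simp [-Finset.sum_boole, add_comm]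
    have h0 : ∀ y : Fin p → Bool, cnt (Fin.cons false y : Fin (p + 1) → Bool) = cnt y := by
      intro y; unfold cnt; rw [Fin.sum_univ_succ]; simp [-Finset.sum_boole]
    simp only [h1, h0]
    cases j with
    | zero => simp [ih]
    | succ j => 
      simp only [Nat.add_right_cancel_iff, ih, Nat.choose_succ_succ]
      push_cast; ring

theorem sum_chi_s4 {p : ℕ} (y : Fin p → Bool) : ∑ i, chi (y i) = 2 * (cnt y : ℝ) - p := by
  have h : ∀ b : Bool, chi b = 2 * ((if b then 1 else 0 : ℕ) : ℝ) - 1 := by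
    intro b; cases b <;> norm_num [chi]
  simp only [h, Finset.sum_sub_distrib, ← Finset.mul_sum, cnt]
  simp

theorem gfun_append (m : ℕ) (y : Fin m → Bool) (z : Fin 3 → Bool) :
    gfun (m + 3) (Fin.append y z) = sgn (2 * ∑ i, chi (y i) + ∑ i, chi (z i)) := by
  unfold gfun
  congr 1
  rw [Fin.sum_univ_add, Finset.mul_sum]
  simp

theorem sum_append (m : ℕ) (F : (Fin (m + 3) → Bool) → ℝ) :
    ∑ x, F x = ∑ y : Fin m → Bool, ∑ z : Fin 3 → Bool, F (Fin.append y z) := by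
  rw [← (Fin.appendEquiv m 3).sum_comp, Fintype.sum_prod_type]
  rfl

theorem sgn_pos' {z : ℝ} (h : 0 ≤ z) : sgn z = 1 := if_pos h
theorem sgn_neg' {z : ℝ} (h : z < 0) : sgn z = -1 := if_neg (not_le.mpr h)

theorem inner_last (k c : ℕ) (i : Fin 3) :
    ∑ z : Fin 3 → Bool, sgn (2 * (2 * (c : ℝ) - (2 * k : ℕ)) + ∑ i, chi (z i)) * chi (z i)
      = 4 * if c = k then 1 else 0 := by
  rw [sum_three]
  rcases lt_trichotomy c k with h | h | h
  · have h' : (c : ℝ) + 1 ≤ k := by exact_mod_cast h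
    rw [if_neg h.ne]
    fin_cases i <;> simp [Fin.sum_univ_three, chi] <;>
    · repeat rw [sgn_neg' (by linarith)]
      norm_num
  · subst h
    fin_cases i <;> norm_num [Fin.sum_univ_three, vec_two, chi, sgn]
  · have h' : (k : ℝ) + 1 ≤ c := by exact_mod_cast h
    rw [if_neg h.ne']
    fin_cases i <;> simp [Fin.sum_univ_three, chi] <;>
    · repeat rw [sgn_pos' (by linarith)]
      norm_num

/-- sum over the last three bits -/
noncomputable def S3 (t : ℝ) : ℝ := ∑ z : Fin 3 → Bool, sgn (2 * t + ∑ i, chi (z i))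

theorem S3_pos {t : ℝ} (h : 2 ≤ t) : S3 t = 8 := by
  unfold S3
  rw [sum_three]
  simp only [Fin.sum_univ_three, chi]
  simp
  repeat rw [sgn_pos' (by linarith)]
  norm_num

theorem S3_neg {t : ℝ} (h : t ≤ -2) : S3 t = -8 := by
  unfold S3
  rw [sum_three]
  simp only [Fin.sum_univ_three, chi]
  simp
  repeat rw [sgn_neg' (by linarith)]
  norm_num

theorem S3_zero : S3 0 = 0 := by
  unfold S3
  rw [sum_three]
  norm_num [Fin.sum_univ_three, vec_two, chi, sgn]

theorem inner_first (q c : ℕ) :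
    S3 (1 + (2 * (c : ℝ) - (2 * q + 1 : ℕ))) - S3 (-1 + (2 * (c : ℝ) - (2 * q + 1 : ℕ)))
      = 8 * (if c = q then 1 else 0) + 8 * (if c = q + 1 then 1 else 0) := by
  push_cast
  rcases lt_trichotomy c q with h | h | h
  · have h' : (c : ℝ) + 1 ≤ q := by exact_mod_cast h
    rw [if_neg (by omega), if_neg (by omega), S3_neg (by linarith), S3_neg (by linarith)]
    norm_num
  · subst h
    rw [if_pos rfl, if_neg (by omega), S3_neg (t := -1 + _) (by linarith)]
    ring_nf
    rw [S3_zero]; norm_num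
  · rcases Nat.lt_or_ge (q + 1) c with h2 | h2
    · have h' : (q : ℝ) + 1 + 1 ≤ c := by exact_mod_cast h2
      rw [if_neg (by omega), if_neg (by omega), S3_pos (by linarith), S3_pos (by linarith)]
      norm_num
    · obtain rfl : c = q + 1 := by omega
      push_cast
      rw [if_neg (by omega), if_pos rfl, S3_pos (t := 1 + _) (by linarith)]
      ring_nf
      rw [S3_zero]; norm_num

theorem coeff_last (k : ℕ) (i : Fin 3) :
    fourierCoeff (gfun (2 * k + 3)) {Fin.natAdd (2 * k) i}
      = 2 * ((2 * k).choose k : ℝ) / 2 ^ (2 * k + 2) := by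
  unfold fourierCoeff
  rw [sum_append]
  simp only [Finset.prod_singleton, gfun_append, Fin.append_right, sum_chi_s4 (p := 2 * k)]
  simp only [inner_last, ← Finset.mul_sum, count]
  field_simp
  ring

theorem coeff_first (q : ℕ) (i : Fin (2 * q + 1 + 1)) :
    fourierCoeff (gfun (2 * q + 1 + 1 + 3)) {Fin.castAdd 3 i}
      = 8 * ((2 * q + 1).choose q : ℝ) / 2 ^ (2 * q + 4) := by
  unfold fourierCoeff
  rw [sum_append]
  simp only [Finset.prod_singleton, gfun_append, Fin.append_left, ← Finset.sum_mul]
  rw [sum_insertNth i]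
  have h : ∀ (b : Bool) (y : Fin (2 * q + 1) → Bool),
      ∑ j, chi ((i.insertNth b y : Fin (2 * q + 1 + 1) → Bool) j)
        = chi b + (2 * (cnt y : ℝ) - (2 * q + 1 : ℕ)) := by
    intro b y
    rw [Fin.sum_univ_succAbove _ i, ← sum_chi_s4]
    simp
  simp only [h, Fin.insertNth_apply_same]
  have h2 : ∀ y : Fin (2 * q + 1) → Bool, 
      (∑ z : Fin 3 → Bool, sgn (2 * (chi true + (2 * (cnt y : ℝ) - (2 * q + 1 : ℕ)))
          + ∑ i, chi (z i))) * chi true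
      + (∑ z : Fin 3 → Bool, sgn (2 * (chi false + (2 * (cnt y : ℝ) - (2 * q + 1 : ℕ)))
          + ∑ i, chi (z i))) * chi false
      = 8 * (if cnt y = q then 1 else 0) + 8 * (if cnt y = q + 1 then 1 else 0) := by
    intro y
    rw [← inner_first]
    simp [S3, chi]
    ring
  simp only [h2, Finset.sum_add_distrib, ← Finset.mul_sum, count]
  rw [Nat.choose_symm_half]
  field_simp
  ring

theorem stmt4 (n : ℕ) (hn : Odd n) (h3 : 3 ≤ n) :
    fourierWeight 1 (gfun n) =
      ((n : ℝ) - 3) * (8 * ((n - 4).choose ((n - 5) / 2) : ℝ) / 2 ^ (n - 1)) ^ 2 +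
      3 * (2 * ((n - 3).choose ((n - 3) / 2) : ℝ) / 2 ^ (n - 1)) ^ 2 := by
  obtain ⟨k, rfl⟩ : ∃ k, n = 2 * k + 3 := by
    obtain ⟨r, rfl⟩ := hn
    exact ⟨r - 1, by omega⟩
  rw [weight_one, Fin.sum_univ_add]
  simp only [coeff_last]
  have e1 : 2 * k + 3 - 3 = 2 * k := by omega
  have e2 : 2 * k + 3 - 1 = 2 * k + 2 := by omega
  rw [e1, e2, Nat.mul_div_cancel_left k (by norm_num : 0 < 2)]
  rcases k with _ | q
  · simp
  · have hc : ∀ i : Fin (2 * (q + 1)),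
        fourierCoeff (gfun (2 * (q + 1) + 3)) {Fin.castAdd 3 i}
          = 8 * ((2 * q + 1).choose q : ℝ) / 2 ^ (2 * q + 4) := fun i => coeff_first q i
    have e3 : 2 * (q + 1) + 3 - 4 = 2 * q + 1 := by omega
    have e4 : (2 * (q + 1) + 3 - 5) / 2 = q := by omega
    have e5 : 2 * (q + 1) + 2 = 2 * q + 4 := by omega
    simp only [hc, e3, e4, e5, Finset.sum_const, Finset.card_univ, Fintype.card_fin, nsmul_eq_mul]
    push_cast
    ring

end BKS
end

section
/- Every linear threshold function f : {-1,1}^3 → {-1,1} satisfies Stab_ρ(f) ≥ Stab_ρ(Maj_3) for all ρ ∈ [0,1]; that is, the 'Majority is Least Stable' conjecture holds for n = 3. -/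
open Finset

namespace BKS

theorem sgn_cases (z : ℝ) : (0 ≤ z ∧ sgn z = 1) ∨ (z < 0 ∧ sgn z = -1) := by
  unfold sgn
  by_cases h : 0 ≤ z
  · simp [h]
  · right; simp [h]; linarith

set_option maxHeartbeats 4000000 in
/-- The Fourier weight of an LTF on levels 0 and 1 is at least 3/4. -/
theorem low_weight (w0 w1 w2 w3 a b c d e p q r : ℝ)
    (ha : a = sgn (w0 + w1 + w2 + w3))
    (hb : b = sgn (w0 + w1 + w2 - w3))
    (hc : c = sgn (w0 + w1 - w2 + w3))
    (hd : d = sgn (w0 + w1 - w2 - w3))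
    (he : e = sgn (w0 - w1 + w2 + w3))
    (hp : p = sgn (w0 - w1 + w2 - w3))
    (hq : q = sgn (w0 - w1 - w2 + w3))
    (hr : r = sgn (w0 - w1 - w2 - w3)) :
    48 ≤ (a + b + c + d + e + p + q + r)^2 + (a + b + c + d - e - p - q - r)^2 + (a + b - c - d + e + p - q - r)^2 + (a - b + c - d + e - p + q - r)^2 := by
  rcases sgn_cases (w0 + w1 + w2 + w3) with ⟨ka, ea⟩ | ⟨ka, ea⟩ <;> rw [ea] at ha <;>
  rcases sgn_cases (w0 + w1 + w2 - w3) with ⟨kb, eb⟩ | ⟨kb, eb⟩ <;> rw [eb] at hb <;>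
  rcases sgn_cases (w0 + w1 - w2 + w3) with ⟨kc, ec⟩ | ⟨kc, ec⟩ <;> rw [ec] at hc <;>
  rcases sgn_cases (w0 + w1 - w2 - w3) with ⟨kd, ed⟩ | ⟨kd, ed⟩ <;> rw [ed] at hd <;>
  rcases sgn_cases (w0 - w1 + w2 + w3) with ⟨ke, ee⟩ | ⟨ke, ee⟩ <;> rw [ee] at he <;>
  rcases sgn_cases (w0 - w1 + w2 - w3) with ⟨kp, ep⟩ | ⟨kp, ep⟩ <;> rw [ep] at hp <;>
  rcases sgn_cases (w0 - w1 - w2 + w3) with ⟨kq, eq⟩ | ⟨kq, eq⟩ <;> rw [eq] at hq <;>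
  rcases sgn_cases (w0 - w1 - w2 - w3) with ⟨kr, er⟩ | ⟨kr, er⟩ <;> rw [er] at hr
  all_goals subst ha hb hc hd he hp hq hr
  all_goals first
    | (exfalso; linarith)
    | norm_num

theorem sgn_sq (z : ℝ) : sgn z ^ 2 = 1 := by
  rcases sgn_cases z with h | h <;> rw [h.2] <;> norm_num

theorem sum_cube (F : (Fin 3 → Bool) → ℝ) : ∑ x, F x =
    F ![true, true, true] + F ![true, true, false] + F ![true, false, true] + F ![true, false, false] + F ![false, true, true] + F ![false, true, false] + F ![false, false, true] + F ![false, false, false] := by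
  rw [show (Finset.univ : Finset (Fin 3 → Bool)) = {![true, true, true], ![true, true, false], ![true, false, true], ![true, false, false], ![false, true, true], ![false, true, false], ![false, false, true], ![false, false, false]} by decide]
  iterate 7 rw [Finset.sum_insert (by decide)]
  rw [Finset.sum_singleton]
  ring

theorem filt0 : (Finset.univ.filter (fun S : Finset (Fin 3) => S.card = 0)) = {∅} := by decide
theorem filt1 : (Finset.univ.filter (fun S : Finset (Fin 3) => S.card = 1)) = {{0}, {1}, {2}} := by decide
theorem filt2 : (Finset.univ.filter (fun S : Finset (Fin 3) => S.card = 2)) = {{0,1}, {0,2}, {1,2}} := by decide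
theorem filt3 : (Finset.univ.filter (fun S : Finset (Fin 3) => S.card = 3)) = {{0,1,2}} := by decide

theorem weight0 (f : (Fin 3 → Bool) → ℝ) : fourierWeight 0 f = fourierCoeff f ∅ ^ 2 := by
  unfold fourierWeight; rw [filt0]; simp
theorem weight1 (f : (Fin 3 → Bool) → ℝ) : fourierWeight 1 f =
    fourierCoeff f {0} ^ 2 + fourierCoeff f {1} ^ 2 + fourierCoeff f {2} ^ 2 := by
  unfold fourierWeight; rw [filt1, Finset.sum_insert (by decide), Finset.sum_insert (by decide), Finset.sum_singleton]; ring
theorem weight2 (f : (Fin 3 → Bool) → ℝ) : fourierWeight 2 f =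
    fourierCoeff f {0,1} ^ 2 + fourierCoeff f {0,2} ^ 2 + fourierCoeff f {1,2} ^ 2 := by
  unfold fourierWeight; rw [filt2, Finset.sum_insert (by decide), Finset.sum_insert (by decide), Finset.sum_singleton]; ring
theorem weight3 (f : (Fin 3 → Bool) → ℝ) : fourierWeight 3 f = fourierCoeff f {0,1,2} ^ 2 := by
  unfold fourierWeight; rw [filt3]; simp

theorem prod2 (i j : Fin 3) (h : i ≠ j) (u : Fin 3 → ℝ) : ∏ k ∈ ({i, j} : Finset (Fin 3)), u k = u i * u j :=
  Finset.prod_pair h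
theorem prod3 (u : Fin 3 → ℝ) : ∏ k ∈ ({0, 1, 2} : Finset (Fin 3)), u k = u 0 * u 1 * u 2 := by
  rw [Finset.prod_insert (by decide), Finset.prod_insert (by decide), Finset.prod_singleton]; ring

theorem parseval (f : (Fin 3 → Bool) → ℝ) (h : ∀ x, f x ^ 2 = 1) :
    fourierWeight 0 f + fourierWeight 1 f + fourierWeight 2 f + fourierWeight 3 f = 1 := by
  rw [weight0, weight1, weight2, weight3]
  unfold fourierCoeff
  simp only [sum_cube, Finset.prod_empty, Finset.prod_singleton, prod3, prod2 0 1 (by decide),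
    prod2 0 2 (by decide), prod2 1 2 (by decide)]
  simp [chi]
  linear_combination (1/8) * (h ![true, true, true] + h ![true, true, false] + h ![true, false, true] + h ![true, false, false] + h ![false, true, true] + h ![false, true, false] + h ![false, false, true] + h ![false, false, false])

theorem low (f : (Fin 3 → Bool) → ℝ) (hf : IsLTF f) :
    3 / 4 ≤ fourierWeight 0 f + fourierWeight 1 f := by
  obtain ⟨w0, w, h⟩ := hf
  have key := low_weight w0 (w 0) (w 1) (w 2) (f ![true, true, true]) (f ![true, true, false]) (f ![true, false, true]) (f ![true, false, false]) (f ![false, true, true]) (f ![false, true, false]) (f ![false, false, true]) (f ![false, false, false])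
    (by rw [h]; congr 1; simp [Fin.sum_univ_three, chi]; try ring)
    (by rw [h]; congr 1; simp [Fin.sum_univ_three, chi]; try ring)
    (by rw [h]; congr 1; simp [Fin.sum_univ_three, chi]; try ring)
    (by rw [h]; congr 1; simp [Fin.sum_univ_three, chi]; try ring)
    (by rw [h]; congr 1; simp [Fin.sum_univ_three, chi]; try ring)
    (by rw [h]; congr 1; simp [Fin.sum_univ_three, chi]; try ring)
    (by rw [h]; congr 1; simp [Fin.sum_univ_three, chi]; try ring)
    (by rw [h]; congr 1; simp [Fin.sum_univ_three, chi]; try ring)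
  rw [weight0, weight1]
  unfold fourierCoeff
  simp only [sum_cube, Finset.prod_empty, Finset.prod_singleton]
  simp [chi]
  linarith

theorem majStab (ρ : ℝ) : noiseStab ρ (Maj 3) = 3 / 4 * ρ + 1 / 4 * ρ ^ 3 := by
  unfold noiseStab
  simp only [Finset.sum_range_succ, Finset.sum_range_zero]
  rw [weight0, weight1, weight2, weight3]
  unfold fourierCoeff
  simp only [sum_cube, Finset.prod_empty, Finset.prod_singleton, prod3, prod2 0 1 (by decide),
    prod2 0 2 (by decide), prod2 1 2 (by decide)]
  simp [chi, Maj, sgn, Fin.sum_univ_three]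
  norm_num
  try ring

theorem stmt9 (f : (Fin 3 → Bool) → ℝ) (hf : IsLTF f) :
    ∀ ρ : ℝ, 0 ≤ ρ → ρ ≤ 1 → noiseStab ρ (Maj 3) ≤ noiseStab ρ f := by
  intro ρ h0 h1
  have hl := low f hf
  have hp := parseval f (by obtain ⟨w0, w, h⟩ := hf; intro x; rw [h]; exact sgn_sq _)
  have n0 : 0 ≤ fourierWeight 0 f := by rw [weight0]; positivity
  have n2 : 0 ≤ fourierWeight 2 f := by rw [weight2]; positivity
  rw [majStab]
  unfold noiseStab
  simp only [Finset.sum_range_succ, Finset.sum_range_zero]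
  have e3 : fourierWeight 3 f = 1 - fourierWeight 0 f - fourierWeight 1 f - fourierWeight 2 f := by linarith
  rw [e3]
  have t0 : 0 ≤ fourierWeight 0 f * (1 - ρ) := mul_nonneg n0 (by linarith)
  have t2 : 0 ≤ fourierWeight 2 f * (ρ ^ 2 * (1 - ρ)) :=
    mul_nonneg n2 (mul_nonneg (by positivity) (by linarith))
  have t1 : 0 ≤ (fourierWeight 0 f + fourierWeight 1 f - 3 / 4) * (ρ * ((1 - ρ) * (1 + ρ))) :=
    mul_nonneg (by linarith) (mul_nonneg h0 (mul_nonneg (by linarith) (by linarith)))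
  nlinarith [t0, t1, t2]

end BKS
end
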